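/- Every residually finite group is sofic. That is, if G is a group such that for every g ∈ G with g ≠ 1 there exists a finite group H and a group homomorphism φ : G → H with φ(g) ≠ 1, then G is sofic. -/

import Mathlib

/-- Two self-maps of a finite set `A` are `ε`-similar if the number of points where they
differ is at most `ε·|A|`. They are `(1-ε)`-different if they are not `(1-ε)`-similar. -/
def EpsSimilar {A : Type*} [Fintype A] (ε : ℝ) (e f : A → A) : Prop :=
  (Nat.card {a : A // e a ≠ f a} : ℝ) ≤ ε * Fintype.card A

/-- An `(F, ε)`-quasi-action of a group `G` on a finite set `A`:
(a) `φ(ef)` is `ε`-similar to `φ(e)` followed by `φ(f)` for `e, f ∈ F`;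
(b) `φ(1)` is `ε`-similar to the identity;
(c) for `1 ≠ e ∈ F`, `φ(e)` is `(1-ε)`-different from the identity. -/
def IsQuasiAction {G : Type*} [Group G] (F : Finset G) (ε : ℝ)
    {A : Type*} [Fintype A] (φ : G → A → A) : Prop :=
  (∀ e ∈ F, ∀ f ∈ F, EpsSimilar ε (φ (e * f)) (fun a => φ f (φ e a))) ∧
  EpsSimilar ε (φ 1) id ∧
  (∀ e ∈ F, e ≠ 1 → ¬ EpsSimilar (1 - ε) (φ e) id)

/-- A group `G` is sofic if for every finite subset `F ⊆ G` and every `ε ∈ (0,1)` there is an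
`(F, ε)`-quasi-action of `G` on some finite nonempty set. -/
def IsSofic (G : Type*) [Group G] : Prop :=
  ∀ (F : Finset G) (ε : ℝ), 0 < ε → ε < 1 →
    ∃ (A : Type) (_ : Fintype A) (_ : Nonempty A) (φ : G → A → A),
      IsQuasiAction F ε φ

/-!
A finite subset of a residually finite group is separated by a homomorphism to a single finite
group, namely a product of finitely many of the given ones. The regular action of that finite
group, pulled back, is multiplicative with no error, and it is free, so a nontrivial element of
the finite subset moves every point. Only the values on a finite subset matter, so local
embeddability into finite groups is enough.
-/

section EpsSimilar

variable {A : Type*} [Fintype A] {ε : ℝ} {e f : A → A}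

theorem epsSimilar_of_forall_eq (hε : 0 ≤ ε) (heq : ∀ a, e a = f a) : EpsSimilar ε e f := by
  simpa [EpsSimilar, heq] using mul_nonneg hε (Nat.cast_nonneg (Fintype.card A))

theorem not_epsSimilar_of_forall_ne [Nonempty A] (hε : ε < 1) (hne : ∀ a, e a ≠ f a) :
    ¬ EpsSimilar ε e f := by
  have card_ne : Nat.card {a : A // e a ≠ f a} = Fintype.card A := by
    rw [Nat.card_congr (Equiv.subtypeUnivEquiv hne), Nat.card_eq_fintype_card]
  have card_pos : (0 : ℝ) < Fintype.card A := mod_cast Fintype.card_pos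
  rw [EpsSimilar, card_ne, not_le]
  exact mul_lt_of_lt_one_left card_pos hε

end EpsSimilar

-- The multiplication is on the right because condition (a) applies `φ e` first.
theorem isQuasiAction_mul_right {G Q : Type*} [Group G] [Group Q] [Fintype Q] {F : Finset G}
    {ε : ℝ} (hε : 0 < ε) {ψ : G → Q} (map_one : ψ 1 = 1)
    (map_mul : ∀ g ∈ F, ∀ h ∈ F, ψ (g * h) = ψ g * ψ h)
    (map_ne_one : ∀ g ∈ F, g ≠ 1 → ψ g ≠ 1) :
    IsQuasiAction F ε (fun g (a : Q) => a * ψ g) := by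
  refine ⟨fun g hg h hh => ?_, ?_, fun g hg hg1 => ?_⟩
  · exact epsSimilar_of_forall_eq hε.le fun a => by simp only [map_mul g hg h hh, mul_assoc]
  · exact epsSimilar_of_forall_eq hε.le fun a => by simp only [map_one, mul_one, id]
  · exact not_epsSimilar_of_forall_ne (sub_lt_self 1 hε)
      fun _ => mul_ne_left.mpr (map_ne_one g hg hg1)

/-- A group is locally embeddable into finite groups (LEF) if each of its finite subsets admits a
map to a finite group that is injective and multiplicative on that subset. The map is defined on
all of `G`, with arbitrary values outside `F` and `F * F`; `Q : Type` loses nothing, since every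
finite group has a copy in `Type`. -/
def IsLEF (G : Type*) [Group G] : Prop :=
  ∀ F : Finset G, ∃ (Q : Type) (_ : Group Q) (_ : Finite Q) (ψ : G → Q),
    Set.InjOn ψ F ∧ ∀ g ∈ F, ∀ h ∈ F, ψ (g * h) = ψ g * ψ h

theorem isSofic_of_residuallyFinite_general {G : Type*} [Group G] (hG : IsLEF G) : IsSofic G := by
  classical
  intro F ε hε _
  obtain ⟨Q, _, _, ψ, inj, map_mul⟩ := hG (insert 1 F)
  have one_mem : 1 ∈ insert 1 F := Finset.mem_insert_self 1 F
  have mem {g : G} (hg : g ∈ F) : g ∈ insert 1 F := Finset.mem_insert_of_mem hg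
  have map_one : ψ 1 = 1 := by simpa using map_mul 1 one_mem 1 one_mem
  have map_ne_one : ∀ g ∈ F, g ≠ 1 → ψ g ≠ 1 := fun g hg hg1 hψ =>
    hg1 (inj (mem hg) one_mem (hψ.trans map_one.symm))
  obtain ⟨_⟩ := nonempty_fintype Q
  exact ⟨Q, inferInstance, inferInstance, fun g a => a * ψ g, isQuasiAction_mul_right hε map_one
    (fun g hg h hh => map_mul g (mem hg) h (mem hh)) map_ne_one⟩

-- Direct factors are adjoined one at a time, because a product indexed by the elements of `F`
-- would land in universe `max u v`.
theorem exists_finite_monoidHom_forall_ne_one.{u, v} {G : Type u} [MulOneClass G]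
    (h : ∀ g : G, g ≠ 1 → ∃ (H : Type v) (_ : Group H) (_ : Finite H) (φ : G →* H), φ g ≠ 1)
    (F : Finset G) :
    ∃ (Q : Type v) (_ : Group Q) (_ : Finite Q) (ψ : G →* Q), ∀ g ∈ F, g ≠ 1 → ψ g ≠ 1 := by
  classical
  induction F using Finset.induction_on with
  | empty => exact ⟨PUnit, inferInstance, inferInstance, 1, by simp⟩
  | insert g F _ ih =>
    obtain ⟨Q, _, _, ψ, hψ⟩ := ih
    by_cases hg : g = 1
    · exact ⟨Q, _, ‹_›, ψ, Finset.forall_mem_insert .. |>.mpr ⟨absurd hg, hψ⟩⟩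
    · obtain ⟨H, _, _, φ, hφ⟩ := h g hg
      refine ⟨Q × H, inferInstance, inferInstance, ψ.prod φ, ?_⟩
      refine Finset.forall_mem_insert .. |>.mpr ⟨fun _ eq_one => ?_, fun k hk hk1 eq_one => ?_⟩
      · exact hφ (Prod.ext_iff.mp eq_one).2
      · exact hψ k hk hk1 (Prod.ext_iff.mp eq_one).1

open scoped Pointwise in
theorem isLEF_of_residuallyFinite {G : Type*} [Group G]
    (h : ∀ g : G, g ≠ 1 → ∃ (H : Type) (_ : Group H) (_ : Finite H) (φ : G →* H), φ g ≠ 1) :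
    IsLEF G := by
  classical
  intro F
  obtain ⟨Q, _, _, ψ, hψ⟩ := exists_finite_monoidHom_forall_ne_one h (F / F)
  have inj : Set.InjOn ψ F := fun a ha b hb hab => by
    by_contra hne
    refine hψ (a / b) (Finset.div_mem_div ha hb) (div_ne_one.mpr hne) ?_
    rw [map_div, hab, div_self']
  exact ⟨Q, _, ‹_›, ψ, inj, fun a _ b _ => map_mul ψ a b⟩

/-- Every residually finite group is sofic. -/
theorem isSofic_of_residuallyFinite {G : Type*} [Group G]
    (h : ∀ g : G, g ≠ 1 → ∃ (H : Type) (_ : Group H) (_ : Finite H) (φ : G →* H), φ g ≠ 1) :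
    IsSofic G :=
  isSofic_of_residuallyFinite_general (isLEF_of_residuallyFinite h)
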